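/- arXiv:math/0507429 — 3 statements merged into one kernel-verified Lean document; each statement's English description precedes it below -/
import Mathlib

section
/- Let T and S be invertible measure-preserving transformations of standard Borel probability spaces (X, 𝒜, μ) and (Y, ℬ, ν). Call a sub-σ-algebra ℱ ⊆ ℬ with S⁻¹ℱ = ℱ a T-factor σ-algebra of S if there exists a probability measure Λ on Y × X^ℕ, invariant under S × T^{(∞)} (where T^{(∞)} acts coordinatewise on X^ℕ), whose marginal on Y is ν and whose marginal on each X-coordinate is μ, such that for every F ∈ ℱ there is a measurable E ⊆ X^ℕ with Λ((F × X^ℕ) Δ (Y × E)) = 0. Then: (1) there exists a maximum T-factor σ-algebra ℱ_T of S, i.e., a T-factor σ-algebra containing every T-factor σ-algebra of S modulo ν-null sets; (2) under any joining λ of T and S, the σ-algebras 𝒜 ⊗ {∅, Y} and {∅, X} ⊗ ℬ are conditionally independent given {∅, X} ⊗ ℱ_T. -/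
open MeasureTheory Set

/-- `F` is a `T`-factor σ-algebra of `S`: an `S`-invariant sub-σ-algebra of `Y` which is
a factor σ-algebra of a joining of `S` with countably many copies of `T` identified,
mod `0`, with a sub-σ-algebra of the `X^ℕ`-coordinates. -/
def IsTFactorSigmaAlgebra {X Y : Type*} [mX : MeasurableSpace X] [mY : MeasurableSpace Y]
    (μ : Measure X) (ν : Measure Y) (T : X ≃ᵐ X) (S : Y ≃ᵐ Y)
    (F : {m : MeasurableSpace Y // m ≤ mY}) : Prop :=
  (∀ B : Set Y, MeasurableSet[F.1] (⇑S ⁻¹' B) ↔ MeasurableSet[F.1] B) ∧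
  ∃ Lam : Measure (Y × (ℕ → X)),
    IsProbabilityMeasure Lam ∧
    MeasurePreserving (Prod.map ⇑S fun (x : ℕ → X) (n : ℕ) => T (x n)) Lam Lam ∧
    Lam.map Prod.fst = ν ∧
    (∀ n : ℕ, Lam.map (fun p : Y × (ℕ → X) => p.2 n) = μ) ∧
    ∀ Fs : Set Y, MeasurableSet[F.1] Fs → ∃ E : Set (ℕ → X), MeasurableSet E ∧
      Lam (symmDiff (Fs ×ˢ (univ : Set (ℕ → X))) ((univ : Set Y) ×ˢ E)) = 0

/-!
Given `y`, draw infinitely many independent copies of `x` from its conditional law under a joining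
of `T` and `S`. By the strong law of large numbers the copies determine that conditional law, so it
is measurable with respect to a `T`-factor σ-algebra of `S`; conditional independence then follows
from the tower property. The maximum exists because countably many joinings of `S` with powers of
`T` can be glued relatively independently over `Y` into a single one, and because, `ν` being
separable, countably many sets are dense among all those belonging to a `T`-factor σ-algebra.
-/

open ProbabilityTheory Filter Topology

section InfiniteProductKernel

variable {ι Y : Type*} {Z W : ι → Type*} [MeasurableSpace Y]
  [∀ i, MeasurableSpace (Z i)] [∀ i, MeasurableSpace (W i)]

lemma measurable_infinitePi_kernel (κ : ∀ i, Kernel Y (Z i)) [∀ i, IsMarkovKernel (κ i)] :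
    Measurable fun y => Measure.infinitePi fun i => κ i y := by
  refine Measurable.measure_of_isPiSystem_of_isProbabilityMeasure
    generateFrom_squareCylinders.symm
    (isPiSystem_squareCylinders (fun _ => MeasurableSpace.isPiSystem_measurableSet) (by simp)) ?_
  rintro _ ⟨s, t, ht, rfl⟩
  have ht' (i : ι) : MeasurableSet (t i) := ht i (mem_univ i)
  simp_rw [Measure.infinitePi_pi _ fun i _ => ht' i]
  exact Finset.measurable_prod _ fun i _ => (κ i).measurable_coe (ht' i)

/-- The product kernel `y ↦ ⨂ i, κ i y` of a family of Markov kernels: given `y`, the coordinates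
are independent with laws `κ i y`. -/
noncomputable def infinitePiKernel (κ : ∀ i, Kernel Y (Z i)) [∀ i, IsMarkovKernel (κ i)] :
    Kernel Y (∀ i, Z i) where
  toFun y := Measure.infinitePi fun i => κ i y
  measurable' := measurable_infinitePi_kernel κ

lemma infinitePiKernel_apply (κ : ∀ i, Kernel Y (Z i)) [∀ i, IsMarkovKernel (κ i)] (y : Y) :
    infinitePiKernel κ y = Measure.infinitePi fun i => κ i y :=
  rfl

instance (κ : ∀ i, Kernel Y (Z i)) [∀ i, IsMarkovKernel (κ i)] :
    IsMarkovKernel (infinitePiKernel κ) where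
  isProbabilityMeasure y := by rw [infinitePiKernel_apply]; infer_instance

lemma infinitePiKernel_map_eval (κ : ∀ i, Kernel Y (Z i)) [∀ i, IsMarkovKernel (κ i)] (i : ι) :
    (infinitePiKernel κ).map (Function.eval i) = κ i := by
  ext1 y
  rw [Kernel.map_apply _ (measurable_pi_apply i), infinitePiKernel_apply]
  exact Measure.infinitePi_map_eval (fun i => κ i y) i

lemma measurePreserving_eval_compProd_infinitePiKernel (ν : Measure Y) [SFinite ν]
    (κ : ∀ i, Kernel Y (Z i)) [∀ i, IsMarkovKernel (κ i)] (i : ι) :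
    MeasurePreserving (Prod.map id (Function.eval i)) (ν ⊗ₘ infinitePiKernel κ) (ν ⊗ₘ κ i) := by
  refine ⟨by fun_prop, ?_⟩
  rw [← Measure.compProd_map (measurable_pi_apply i), infinitePiKernel_map_eval]

end InfiniteProductKernel

section Equivariance

variable {Y Y' : Type*} [MeasurableSpace Y] [MeasurableSpace Y'] {ν : Measure Y} {ν' : Measure Y'}
  [SFinite ν'] {S : Y ≃ᵐ Y'}

lemma measurePreserving_prodMap_compProd_iff [SFinite ν] {Z W : Type*} [MeasurableSpace Z]
    [MeasurableSpace W] (hS : MeasurePreserving S ν ν') {R : Z → W} (hR : Measurable R)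
    {κ : Kernel Y Z} [IsSFiniteKernel κ] {η : Kernel Y' W} [IsSFiniteKernel η] :
    MeasurePreserving (Prod.map S R) (ν ⊗ₘ κ) (ν' ⊗ₘ η) ↔
      ν ⊗ₘ κ.map R = ν ⊗ₘ η.comap S S.measurable := by
  let S' : Y × W ≃ᵐ Y' × W := S.prodCongr (.refl W)
  have map_left : (ν ⊗ₘ κ).map (Prod.map S R) = (ν ⊗ₘ κ.map R).map S' := by
    rw [Measure.compProd_map hR, Measure.map_map S'.measurable (by fun_prop)]
    rfl
  have map_right : ν' ⊗ₘ η = (ν ⊗ₘ η.comap S S.measurable).map S' := by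
    ext s hs
    rw [S'.map_apply, Measure.compProd_apply hs, Measure.compProd_apply (S'.measurable hs),
      ← hS.lintegral_comp (Kernel.measurable_kernel_prodMk_left hs)]
    rfl
  rw [← S'.map_measurableEquiv_injective.eq_iff, ← map_left, ← map_right]
  exact ⟨fun h => h.map_eq, fun h => ⟨by fun_prop, h⟩⟩

lemma measurePreserving_prodMap_compProd_infinitePiKernel [IsFiniteMeasure ν] {ι : Type*}
    [Countable ι] {Z W : ι → Type*} [∀ i, MeasurableSpace (Z i)] [∀ i, MeasurableSpace (W i)]
    [∀ i, MeasurableSpace.CountableOrCountablyGenerated Y (W i)] (hS : MeasurePreserving S ν ν')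
    {R : ∀ i, Z i → W i} (hR : ∀ i, Measurable (R i))
    {κ : ∀ i, Kernel Y (Z i)} [∀ i, IsMarkovKernel (κ i)]
    {η : ∀ i, Kernel Y' (W i)} [∀ i, IsMarkovKernel (η i)]
    (h : ∀ i, MeasurePreserving (Prod.map S (R i)) (ν ⊗ₘ κ i) (ν' ⊗ₘ η i)) :
    MeasurePreserving (Prod.map S fun x i => R i (x i)) (ν ⊗ₘ infinitePiKernel κ)
      (ν' ⊗ₘ infinitePiKernel η) := by
  have hκη (i : ι) : (κ i).map (R i) =ᵐ[ν] (η i).comap S S.measurable :=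
    Kernel.ae_eq_of_compProd_eq ((measurePreserving_prodMap_compProd_iff hS (hR i)).1 (h i))
  have hR_pi : Measurable fun (x : ∀ i, Z i) i => R i (x i) := by fun_prop
  refine (measurePreserving_prodMap_compProd_iff hS hR_pi).2 (Measure.compProd_congr ?_)
  filter_upwards [ae_all_iff.2 hκη] with y hy
  simp only [Kernel.map_apply _ (hR _), Kernel.comap_apply] at hy
  simp only [Kernel.map_apply _ hR_pi, Kernel.comap_apply, infinitePiKernel_apply, ← hy]
  exact Measure.infinitePi_map_pi _ hR

end Equivariance

section DeterminedBySnd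

variable {Y Z : Type*} [mY : MeasurableSpace Y] [MeasurableSpace Z] {Λ : Measure (Y × Z)}

/-- The σ-algebra of those measurable sets of `Y` that are a function of the second coordinate,
`Λ`-almost surely. -/
abbrev determinedBySnd (Λ : Measure (Y × Z)) : MeasurableSpace Y where
  MeasurableSet' B := MeasurableSet B ∧
    ∃ E : Set Z, MeasurableSet E ∧ (Prod.fst ⁻¹' B : Set (Y × Z)) =ᵐ[Λ] Prod.snd ⁻¹' E
  measurableSet_empty := ⟨.empty, ∅, .empty, ae_eq_refl _⟩
  measurableSet_compl := by
    rintro B ⟨hB, E, hE, hBE⟩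
    exact ⟨hB.compl, Eᶜ, hE.compl, hBE.compl⟩
  measurableSet_iUnion B hB := by
    choose hB E hE hBE using hB
    refine ⟨.iUnion hB, ⋃ n, E n, .iUnion hE, ?_⟩
    simpa only [preimage_iUnion] using Filter.EventuallyEq.countable_iUnion hBE

lemma determinedBySnd_le : determinedBySnd Λ ≤ mY :=
  fun _ hB => hB.1

lemma ae_eq_snd_preimage_iff {B : Set Y} {E : Set Z} :
    (Prod.fst ⁻¹' B : Set (Y × Z)) =ᵐ[Λ] Prod.snd ⁻¹' E ↔
      Λ (symmDiff (B ×ˢ (univ : Set Z)) ((univ : Set Y) ×ˢ E)) = 0 := by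
  rw [measure_symmDiff_eq_zero_iff, prod_univ, univ_prod]

lemma measurable_determinedBySnd_of_comp_ae_eq {γ : Type*} [MeasurableSpace γ] {f : Y → γ}
    {g : Z → γ} (hf : Measurable f) (hg : Measurable g)
    (hfg : (fun p => f p.1) =ᵐ[Λ] fun p => g p.2) : Measurable[determinedBySnd Λ] f :=
  fun s hs => ⟨hf hs, g ⁻¹' s, hg hs, hfg.preimage s⟩

lemma measurableSet_determinedBySnd_of_ae_eq {B B' : Set Y} (hB : MeasurableSet B)
    (hBB' : B =ᵐ[Λ.map Prod.fst] B') (hB' : MeasurableSet[determinedBySnd Λ] B') :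
    MeasurableSet[determinedBySnd Λ] B := by
  obtain ⟨-, E, hE, hB'E⟩ := hB'
  have hBB'_fst : (Prod.fst ⁻¹' B : Set (Y × Z)) =ᵐ[Λ] Prod.fst ⁻¹' B' :=
    ae_of_ae_map measurable_fst.aemeasurable hBB'
  exact ⟨hB, E, hE, hBB'_fst.trans hB'E⟩

lemma measurable_determinedBySnd_of_prodMap {Y' Z' : Type*} [MeasurableSpace Y']
    [MeasurableSpace Z'] {Λ' : Measure (Y' × Z')} {S : Y → Y'} {R : Z → Z'} (hS : Measurable S)
    (hR : Measurable R) (h : MeasurePreserving (Prod.map S R) Λ Λ') :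
    Measurable[determinedBySnd Λ, determinedBySnd Λ'] S := by
  rintro B ⟨hB, E, hE, hBE⟩
  exact ⟨hS hB, R ⁻¹' E, hR hE, h.quasiMeasurePreserving.preimage_ae_eq hBE⟩

lemma determinedBySnd_le_of_prodMap_id {Z' : Type*} [MeasurableSpace Z'] {Λ' : Measure (Y × Z')}
    {R : Z → Z'} (hR : Measurable R) (h : MeasurePreserving (Prod.map id R) Λ Λ') :
    determinedBySnd Λ' ≤ determinedBySnd Λ :=
  measurable_determinedBySnd_of_prodMap measurable_id hR h

lemma measurableSet_determinedBySnd_preimage_iff {S : Y ≃ᵐ Y} {R : Z ≃ᵐ Z}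
    (h : MeasurePreserving (Prod.map S R) Λ Λ) {B : Set Y} :
    MeasurableSet[determinedBySnd Λ] (S ⁻¹' B) ↔ MeasurableSet[determinedBySnd Λ] B := by
  have h_symm : MeasurePreserving (Prod.map S.symm R.symm) Λ Λ :=
    MeasurePreserving.symm (S.prodCongr R) h
  refine ⟨fun hB => ?_, fun hB =>
    measurable_determinedBySnd_of_prodMap S.measurable R.measurable h hB⟩
  simpa only [← preimage_comp, S.self_comp_symm, preimage_id] using
    measurable_determinedBySnd_of_prodMap S.symm.measurable R.symm.measurable h_symm hB

end DeterminedBySnd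

section StrongLaw

variable {X Y : Type*} [MeasurableSpace X] [mY : MeasurableSpace Y] {U : Set X}

lemma ae_tendsto_frequency_infinitePi (P : Measure X) [IsProbabilityMeasure P]
    (hU : MeasurableSet U) :
    ∀ᵐ x ∂Measure.infinitePi fun _ : ℕ => P,
      Tendsto (fun n : ℕ => (∑ i ∈ Finset.range n, U.indicator (1 : X → ℝ) (x i)) / n) atTop
        (𝓝 (P.real U)) := by
  have hmeas : Measurable (U.indicator (1 : X → ℝ)) := measurable_one.indicator hU
  have hlaw (i : ℕ) : IdentDistrib (fun x : ℕ → X => U.indicator (1 : X → ℝ) (x i))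
      (U.indicator 1) (Measure.infinitePi fun _ => P) P := by
    have heval := (hmeas.measurePreserving P).comp
      (measurePreserving_eval_infinitePi (fun _ : ℕ => P) i)
    exact ⟨heval.aemeasurable, hmeas.aemeasurable, heval.map_eq⟩
  have hindep : iIndepFun (fun (i : ℕ) (x : ℕ → X) => U.indicator (1 : X → ℝ) (x i))
      (Measure.infinitePi fun _ => P) :=
    iIndepFun_infinitePi (X := fun _ => U.indicator 1) fun _ => hmeas
  have hint : Integrable (U.indicator (1 : X → ℝ)) P := (integrable_const 1).indicator hU
  have hlim := strong_law_ae_real _ ((hlaw 0).integrable_iff.2 hint)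
    (fun _ _ hij => hindep.indepFun hij) fun i => (hlaw i).trans (hlaw 0).symm
  rwa [(hlaw 0).integral_eq, integral_indicator_one hU] at hlim

lemma measurable_determinedBySnd_kernel_real (ν : Measure Y) (κ : Kernel Y X) [IsMarkovKernel κ]
    (hU : MeasurableSet U) :
    Measurable[determinedBySnd (ν ⊗ₘ infinitePiKernel fun _ : ℕ => κ)]
      fun y => (κ y).real U := by
  let frequency (n : ℕ) (x : ℕ → X) : ℝ :=
    (∑ i ∈ Finset.range n, U.indicator (1 : X → ℝ) (x i)) / n
  have hfrequency (n : ℕ) : Measurable (frequency n) :=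
    (Finset.measurable_sum _ fun i _ =>
      (measurable_one.indicator hU).comp (measurable_pi_apply i)).div_const _
  have hlimsup : Measurable fun x => limsup (fun n => frequency n x) atTop := .limsup hfrequency
  have hreal : Measurable fun y => (κ y).real U := (κ.measurable_coe hU).ennreal_toReal
  refine measurable_determinedBySnd_of_comp_ae_eq hreal hlimsup ?_
  refine Measure.ae_compProd_of_ae_ae
    (measurableSet_eq_fun (hreal.comp measurable_fst) (hlimsup.comp measurable_snd)) ?_
  refine ae_of_all _ fun y => ?_
  filter_upwards [ae_tendsto_frequency_infinitePi (κ y) hU] with x hx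
  exact hx.limsup_eq.symm

end StrongLaw

section ConditionalIndependence

lemma condExp_inter_ae_eq_mul_of_aestronglyMeasurable {Ω : Type*} {m m' mΩ : MeasurableSpace Ω}
    {P : Measure Ω} [IsFiniteMeasure P] (hmm' : m ≤ m') (hm' : m' ≤ mΩ) {A B : Set Ω}
    (hA : MeasurableSet A) (hB : MeasurableSet[m'] B)
    (hAm : AEStronglyMeasurable[m] (P⟦A | m'⟧) P) :
    P⟦A ∩ B | m⟧ =ᵐ[P] P⟦A | m⟧ * P⟦B | m⟧ := by
  let indA : Ω → ℝ := A.indicator fun _ => 1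
  let indB : Ω → ℝ := B.indicator fun _ => 1
  have hindA : Integrable indA P := (integrable_const 1).indicator hA
  have hindB : Integrable indB P := (integrable_const 1).indicator (hm' B hB)
  have hindBm' : StronglyMeasurable[m'] indB := stronglyMeasurable_const.indicator hB
  have hmul (f : Ω → ℝ) : f * indB = B.indicator f := by
    ext ω
    by_cases hω : ω ∈ B <;> simp [indB, hω]
  have hinter : (A ∩ B).indicator (fun _ => (1 : ℝ)) = indA * indB := by
    rw [hmul, inter_comm, ← indicator_indicator]
  have hcondA : P[indA | m] =ᵐ[P] P[indA | m'] :=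
    (condExp_condExp_of_le hmm' hm').symm.trans
      (condExp_of_aestronglyMeasurable' (hmm'.trans hm') hAm integrable_condExp)
  calc P⟦A ∩ B | m⟧
      = P[indA * indB | m] := by rw [hinter]
    _ =ᵐ[P] P[P[indA * indB | m'] | m] := (condExp_condExp_of_le hmm' hm').symm
    _ =ᵐ[P] P[P[indA | m'] * indB | m] := condExp_congr_ae <|
      condExp_mul_of_stronglyMeasurable_right hindBm'
        (by rw [hmul]; exact hindA.indicator (hm' B hB)) hindA
    _ =ᵐ[P] P[indA | m'] * P[indB | m] := condExp_mul_of_aestronglyMeasurable_left hAm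
        (by rw [hmul]; exact integrable_condExp.indicator (hm' B hB)) hindB
    _ =ᵐ[P] P[indA | m] * P[indB | m] := hcondA.symm.mul (ae_eq_refl _)

lemma condExp_inter_ae_eq_mul_of_determinedBySnd_le {X Y : Type*} [MeasurableSpace X]
    [StandardBorelSpace X] [Nonempty X] {F : MeasurableSpace Y} [mY : MeasurableSpace Y]
    {lam : Measure (X × Y)}
    [IsFiniteMeasure lam] (hF : F ≤ mY)
    (hdet : determinedBySnd (lam.map Prod.snd ⊗ₘ
      infinitePiKernel fun _ : ℕ => condDistrib Prod.fst Prod.snd lam) ≤ F)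
    {U : Set X} {V : Set Y} (hU : MeasurableSet U) (hV : MeasurableSet V) :
    lam⟦Prod.fst ⁻¹' U ∩ Prod.snd ⁻¹' V | F.comap Prod.snd⟧ =ᵐ[lam]
      lam⟦Prod.fst ⁻¹' U | F.comap Prod.snd⟧ * lam⟦Prod.snd ⁻¹' V | F.comap Prod.snd⟧ := by
  let κ : Kernel Y X := condDistrib Prod.fst Prod.snd lam
  have hκ : Measurable[F] fun y => (κ y).real U :=
    (measurable_determinedBySnd_kernel_real (lam.map Prod.snd) κ hU).mono hdet le_rfl
  have hκ_snd : Measurable[F.comap Prod.snd] fun p : X × Y => (κ p.2).real U :=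
    hκ.comp (comap_measurable Prod.snd)
  exact condExp_inter_ae_eq_mul_of_aestronglyMeasurable (MeasurableSpace.comap_mono hF)
    measurable_snd.comap_le (measurable_fst hU) ⟨V, hV, rfl⟩
    ⟨_, hκ_snd.stronglyMeasurable,
      (condDistrib_ae_eq_condExp measurable_snd measurable_fst hU).symm⟩

end ConditionalIndependence

section SeparableMeasure

variable {Y : Type*}

lemma exists_measurableSet_ae_eq_of_aestronglyMeasurable_indicator {m mY : MeasurableSpace Y}
    {ν : Measure Y} {B : Set Y} (hB : AEStronglyMeasurable[m] (B.indicator (1 : Y → ℝ)) ν) :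
    ∃ B', MeasurableSet[m] B' ∧ B =ᵐ[ν] B' := by
  obtain ⟨g, hg, hBg⟩ := hB
  refine ⟨g ⁻¹' {1}, hg.measurable (measurableSet_singleton 1), ?_⟩
  filter_upwards [hBg] with y hy
  refine propext (?_ : y ∈ B ↔ g y = 1)
  rw [← hy]
  by_cases hyB : y ∈ B <;> simp [hyB]

lemma exists_measurableSet_ae_eq_of_indicatorConstLp_mem_closure {m mY : MeasurableSpace Y}
    {ν : Measure Y} [IsFiniteMeasure ν] (hm : m ≤ mY) {ι : Type*} {B : ι → Set Y}
    (hB : ∀ i, MeasurableSet[m] (B i)) {C : Set Y} (hC : MeasurableSet C)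
    (hCB : indicatorConstLp 1 hC (measure_ne_top ν C) (1 : ℝ) ∈
      closure (range fun i => indicatorConstLp 1 (hm _ (hB i)) (measure_ne_top ν (B i)) 1)) :
    ∃ C', MeasurableSet[m] C' ∧ C =ᵐ[ν] C' := by
  have hclosure : closure (range fun i =>
      indicatorConstLp 1 (hm _ (hB i)) (measure_ne_top ν (B i)) (1 : ℝ)) ⊆
        {f : Lp ℝ 1 ν | AEStronglyMeasurable[m] f ν} := by
    refine closure_minimal ?_ (isClosed_aestronglyMeasurable hm)
    rintro _ ⟨i, rfl⟩
    exact ⟨_, (@stronglyMeasurable_const _ _ m _ 1).indicator (hB i), indicatorConstLp_coeFn⟩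
  exact exists_measurableSet_ae_eq_of_aestronglyMeasurable_indicator
    ((hclosure hCB).congr indicatorConstLp_coeFn)

lemma exists_seq_forall_ae_eq_generateFrom [MeasurableSpace Y] (ν : Measure Y) [IsFiniteMeasure ν]
    [IsSeparable ν] {𝒞 : Set (Set Y)} (h𝒞 : 𝒞.Nonempty) (hmeas : ∀ C ∈ 𝒞, MeasurableSet C) :
    ∃ B : ℕ → Set Y, (∀ n, B n ∈ 𝒞) ∧ ∀ C ∈ 𝒞,
      ∃ C', MeasurableSet[MeasurableSpace.generateFrom (range B)] C' ∧ C =ᵐ[ν] C' := by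
  have : Fact ((1 : ENNReal) ≠ ⊤) := ⟨ENNReal.one_ne_top⟩
  have : Nonempty 𝒞 := h𝒞.to_subtype
  let ind (C : 𝒞) : Lp ℝ 1 ν := indicatorConstLp 1 (hmeas C C.2) (measure_ne_top ν C) 1
  obtain ⟨D, hD, hD_countable, hD_dense⟩ :=
    (TopologicalSpace.IsSeparable.of_separableSpace (range ind)).exists_countable_dense_subset
  obtain ⟨f, rfl⟩ := hD_countable.exists_eq_range
    (closure_nonempty_iff.1 ((range_nonempty ind).mono hD_dense))
  choose B hB using fun n => hD (mem_range_self n)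
  obtain rfl : (fun n => ind (B n)) = f := funext hB
  refine ⟨fun n => B n, fun n => (B n).2, fun C hC => ?_⟩
  refine exists_measurableSet_ae_eq_of_indicatorConstLp_mem_closure
    (MeasurableSpace.generateFrom_le ?_) (fun n => .basic _ (mem_range_self n)) (hmeas C hC)
    (hD_dense (mem_range_self (⟨C, hC⟩ : 𝒞)))
  rintro _ ⟨n, rfl⟩
  exact hmeas _ (B n).2

end SeparableMeasure

lemma isProbabilityMeasure_of_measurePreserving {α β : Type*} [MeasurableSpace α]
    [MeasurableSpace β] {P : Measure α} {Q : Measure β} [IsProbabilityMeasure Q] {f : α → β}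
    (hf : MeasurePreserving f P Q) : IsProbabilityMeasure P :=
  have : IsProbabilityMeasure (P.map f) := by rwa [hf.map_eq]
  Measure.isProbabilityMeasure_of_map f

section PowerJoining

variable {ι ι' X Y : Type*} [MeasurableSpace X] [mY : MeasurableSpace Y] {μ : Measure X}
  {ν : Measure Y} {T : X ≃ᵐ X} {S : Y ≃ᵐ Y}

/-- `Λ` is a joining of `S` with copies of `T` indexed by `ι`. -/
structure IsPowerJoining (μ : Measure X) (ν : Measure Y) (T : X ≃ᵐ X) (S : Y ≃ᵐ Y)
    (Λ : Measure (Y × (ι → X))) : Prop where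
  measurePreserving_prodMap : MeasurePreserving (Prod.map S fun x i => T (x i)) Λ Λ
  measurePreserving_fst : MeasurePreserving Prod.fst Λ ν
  measurePreserving_eval (i : ι) : MeasurePreserving (fun p => p.2 i) Λ μ

lemma IsPowerJoining.isProbabilityMeasure [IsProbabilityMeasure ν] {Λ : Measure (Y × (ι → X))}
    (hΛ : IsPowerJoining μ ν T S Λ) : IsProbabilityMeasure Λ :=
  isProbabilityMeasure_of_measurePreserving hΛ.measurePreserving_fst

lemma isTFactorSigmaAlgebra_iff_exists_isPowerJoining [IsProbabilityMeasure ν]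
    {F : {m : MeasurableSpace Y // m ≤ mY}} :
    IsTFactorSigmaAlgebra μ ν T S F ↔
      (∀ B : Set Y, MeasurableSet[F.1] (S ⁻¹' B) ↔ MeasurableSet[F.1] B) ∧
        ∃ Λ : Measure (Y × (ℕ → X)), IsPowerJoining μ ν T S Λ ∧ F.1 ≤ determinedBySnd Λ := by
  refine and_congr_right fun _ => exists_congr fun Λ => ⟨?_, ?_⟩
  · rintro ⟨-, hinv, hfst, heval, hF⟩
    refine ⟨⟨hinv, ⟨measurable_fst, hfst⟩, fun n => ⟨by fun_prop, heval n⟩⟩, fun B hB => ?_⟩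
    exact ⟨F.2 B hB, by simpa only [ae_eq_snd_preimage_iff] using hF B hB⟩
  · rintro ⟨hΛ, hF⟩
    refine ⟨hΛ.isProbabilityMeasure, hΛ.measurePreserving_prodMap,
      hΛ.measurePreserving_fst.map_eq, fun n => (hΛ.measurePreserving_eval n).map_eq,
      fun B hB => ?_⟩
    simpa only [ae_eq_snd_preimage_iff] using (hF B hB).2

lemma IsPowerJoining.isTFactorSigmaAlgebra_determinedBySnd [IsProbabilityMeasure ν]
    {Λ : Measure (Y × (ℕ → X))} (hΛ : IsPowerJoining μ ν T S Λ) :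
    IsTFactorSigmaAlgebra μ ν T S ⟨determinedBySnd Λ, determinedBySnd_le⟩ :=
  isTFactorSigmaAlgebra_iff_exists_isPowerJoining.2
    ⟨fun _ => measurableSet_determinedBySnd_preimage_iff (R := .piCongrRight fun _ => T)
      hΛ.measurePreserving_prodMap, Λ, hΛ, le_rfl⟩

lemma IsPowerJoining.map_comp {Λ : Measure (Y × (ι → X))} (hΛ : IsPowerJoining μ ν T S Λ)
    (f : ι' → ι) : IsPowerJoining μ ν T S (Λ.map (Prod.map id fun x => x ∘ f)) where
  measurePreserving_prodMap :=
    (Measurable.measurePreserving (by fun_prop) Λ).of_semiconj hΛ.measurePreserving_prodMap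
      (fun _ => rfl) (by fun_prop)
  measurePreserving_fst :=
    MeasurePreserving.map_of_comp hΛ.measurePreserving_fst (by fun_prop) (by fun_prop)
  measurePreserving_eval i :=
    MeasurePreserving.map_of_comp (hΛ.measurePreserving_eval (f i)) (by fun_prop) (by fun_prop)

lemma isPowerJoining_compProd_infinitePiKernel [Countable ι]
    [MeasurableSpace.CountablyGenerated X] [IsFiniteMeasure ν] (hS : MeasurePreserving S ν ν)
    {κ : Kernel Y X} [IsMarkovKernel κ]
    (hinv : MeasurePreserving (Prod.map S T) (ν ⊗ₘ κ) (ν ⊗ₘ κ))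
    (hsnd : MeasurePreserving Prod.snd (ν ⊗ₘ κ) μ) :
    IsPowerJoining μ ν T S (ν ⊗ₘ infinitePiKernel fun _ : ι => κ) where
  measurePreserving_prodMap := measurePreserving_prodMap_compProd_infinitePiKernel hS
    (fun _ => T.measurable) fun _ => hinv
  measurePreserving_fst := ⟨measurable_fst, Measure.fst_compProd _ _⟩
  measurePreserving_eval i :=
    hsnd.comp (measurePreserving_eval_compProd_infinitePiKernel ν (fun _ => κ) i)

lemma exists_isPowerJoining [MeasurableSpace.CountablyGenerated X] [IsProbabilityMeasure μ]
    [IsProbabilityMeasure ν] (hT : MeasurePreserving T μ μ) (hS : MeasurePreserving S ν ν) :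
    ∃ Λ : Measure (Y × (ℕ → X)), IsPowerJoining μ ν T S Λ := by
  refine ⟨_, isPowerJoining_compProd_infinitePiKernel hS (κ := Kernel.const Y μ) ?_ ?_⟩ <;>
    rw [Measure.compProd_const]
  · exact hS.prod hT
  · exact measurePreserving_snd

lemma isPowerJoining_condDistrib [StandardBorelSpace X] [Nonempty X] [Countable ι]
    {lam : Measure (X × Y)} [IsFiniteMeasure lam]
    (hfst : MeasurePreserving Prod.fst lam μ) (hsnd : MeasurePreserving Prod.snd lam ν)
    (hinv : MeasurePreserving (Prod.map T S) lam lam) (hS : MeasurePreserving S ν ν) :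
    IsPowerJoining μ ν T S
      (ν ⊗ₘ infinitePiKernel fun _ : ι => condDistrib Prod.fst Prod.snd lam) := by
  have : IsFiniteMeasure ν := hsnd.map_eq ▸ inferInstance
  have hswap : MeasurePreserving Prod.swap lam (ν ⊗ₘ condDistrib Prod.fst Prod.snd lam) := by
    refine ⟨measurable_swap, ?_⟩
    rw [← hsnd.map_eq]
    exact (compProd_map_condDistrib measurable_fst.aemeasurable).symm
  refine isPowerJoining_compProd_infinitePiKernel hS
    (hswap.of_semiconj hinv (fun _ => rfl) (by fun_prop)) ?_
  rw [← hswap.map_eq]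
  exact MeasurePreserving.map_of_comp hfst measurable_snd measurable_swap

lemma exists_isPowerJoining_prod [StandardBorelSpace X] [Nonempty X] [Countable ι] [Countable ι']
    [IsProbabilityMeasure ν] (hS : MeasurePreserving S ν ν) {Λ : ι → Measure (Y × (ι' → X))}
    (hΛ : ∀ i, IsPowerJoining μ ν T S (Λ i)) :
    ∃ M : Measure (Y × (ι × ι' → X)), IsPowerJoining μ ν T S M ∧
      ∀ i, MeasurePreserving (Prod.map id fun x j => x (i, j)) M (Λ i) := by
  have (i : ι) : IsProbabilityMeasure (Λ i) := (hΛ i).isProbabilityMeasure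
  let κ (i : ι) : Kernel Y (ι' → X) := (Λ i).condKernel
  have hκ (i : ι) : ν ⊗ₘ κ i = Λ i := by
    rw [← (hΛ i).measurePreserving_fst.map_eq]
    exact (Λ i).disintegrate _
  let Λ_prod : Measure (Y × (ι → ι' → X)) := ν ⊗ₘ infinitePiKernel κ
  have hinv : MeasurePreserving (Prod.map S fun x i j => T (x i j)) Λ_prod Λ_prod :=
    measurePreserving_prodMap_compProd_infinitePiKernel hS
      (R := fun _ (x : ι' → X) j => T (x j)) (fun _ => by fun_prop) fun i => by
        rw [hκ]; exact (hΛ i).measurePreserving_prodMap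
  have heval (i : ι) : MeasurePreserving (Prod.map id (Function.eval i)) Λ_prod (Λ i) :=
    hκ i ▸ measurePreserving_eval_compProd_infinitePiKernel ν κ i
  let uncurry : Y × (ι → ι' → X) → Y × (ι × ι' → X) := Prod.map id fun x k => x k.1 k.2
  have huncurry : Measurable uncurry := by fun_prop
  refine ⟨Λ_prod.map uncurry, ⟨?_, ?_, fun k => ?_⟩, fun i => ?_⟩
  · exact (huncurry.measurePreserving Λ_prod).of_semiconj hinv (fun _ => rfl) (by fun_prop)
  · exact MeasurePreserving.map_of_comp ⟨measurable_fst, Measure.fst_compProd _ _⟩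
      measurable_fst huncurry
  · exact MeasurePreserving.map_of_comp (((hΛ k.1).measurePreserving_eval k.2).comp (heval k.1))
      (by fun_prop) huncurry
  · exact MeasurePreserving.map_of_comp (heval i) (by fun_prop) huncurry

lemma exists_isPowerJoining_forall_determinedBySnd_le [StandardBorelSpace X] [Nonempty X]
    [IsProbabilityMeasure ν] (hS : MeasurePreserving S ν ν) {Λ : ℕ → Measure (Y × (ℕ → X))}
    (hΛ : ∀ n, IsPowerJoining μ ν T S (Λ n)) :
    ∃ M : Measure (Y × (ℕ → X)), IsPowerJoining μ ν T S M ∧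
      ∀ n, determinedBySnd (Λ n) ≤ determinedBySnd M := by
  obtain ⟨M, hM, hMΛ⟩ := exists_isPowerJoining_prod hS hΛ
  refine ⟨_, hM.map_comp Nat.pairEquiv.symm, fun n => ?_⟩
  refine determinedBySnd_le_of_prodMap_id (R := fun x j => x (Nat.pairEquiv (n, j)))
    (by fun_prop) (MeasurePreserving.map_of_comp ?_ (by fun_prop) (by fun_prop))
  simpa [Function.comp_def, Prod.map_def] using hMΛ n

lemma exists_isPowerJoining_maximal [StandardBorelSpace X] [IsProbabilityMeasure μ]
    [IsProbabilityMeasure ν] [IsSeparable ν] (hT : MeasurePreserving T μ μ)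
    (hS : MeasurePreserving S ν ν) :
    ∃ M : Measure (Y × (ℕ → X)), IsPowerJoining μ ν T S M ∧
      ∀ Λ : Measure (Y × (ℕ → X)), IsPowerJoining μ ν T S Λ →
        determinedBySnd Λ ≤ determinedBySnd M := by
  have : Nonempty X := nonempty_of_isProbabilityMeasure μ
  obtain ⟨Λ₀, hΛ₀⟩ := exists_isPowerJoining hT hS
  obtain ⟨B, hB, hB_gen⟩ := exists_seq_forall_ae_eq_generateFrom ν
    (𝒞 := {C | ∃ Λ : Measure (Y × (ℕ → X)), IsPowerJoining μ ν T S Λ ∧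
      MeasurableSet[determinedBySnd Λ] C})
    ⟨∅, Λ₀, hΛ₀, MeasurableSpace.measurableSet_empty _⟩
    (by rintro C ⟨Λ, -, hC⟩; exact hC.1)
  choose Λ hΛ hBΛ using hB
  obtain ⟨M, hM, hΛM⟩ := exists_isPowerJoining_forall_determinedBySnd_le hS hΛ
  have hgen : MeasurableSpace.generateFrom (range B) ≤ determinedBySnd M := by
    refine MeasurableSpace.generateFrom_le ?_
    rintro _ ⟨n, rfl⟩
    exact hΛM n _ (hBΛ n)
  refine ⟨M, hM, fun L hL C hC => ?_⟩
  obtain ⟨C', hC', hCC'⟩ := hB_gen C ⟨L, hL, hC⟩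
  rw [← hM.measurePreserving_fst.map_eq] at hCC'
  exact measurableSet_determinedBySnd_of_ae_eq hC.1 hCC' (hgen _ hC')

end PowerJoining

theorem maximal_T_factor_sigma_algebra_general
    {X Y : Type*} [MeasurableSpace X] [StandardBorelSpace X] [mY : MeasurableSpace Y]
    (μ : Measure X) (ν : Measure Y) [IsProbabilityMeasure μ] [IsProbabilityMeasure ν]
    [IsSeparable ν] (T : X ≃ᵐ X) (S : Y ≃ᵐ Y)
    (hT : MeasurePreserving T μ μ) (hS : MeasurePreserving S ν ν) :
    ∃ FT : {m : MeasurableSpace Y // m ≤ mY},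
      IsGreatest {F | IsTFactorSigmaAlgebra μ ν T S F} FT ∧
      ∀ lam : Measure (X × Y),
        MeasurePreserving Prod.fst lam μ → MeasurePreserving Prod.snd lam ν →
        MeasurePreserving (Prod.map T S) lam lam →
        ∀ (U : Set X) (V : Set Y), MeasurableSet U → MeasurableSet V →
          lam⟦Prod.fst ⁻¹' U ∩ Prod.snd ⁻¹' V | FT.1.comap Prod.snd⟧ =ᵐ[lam]
            lam⟦Prod.fst ⁻¹' U | FT.1.comap Prod.snd⟧ *
              lam⟦Prod.snd ⁻¹' V | FT.1.comap Prod.snd⟧ := by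
  have : Nonempty X := nonempty_of_isProbabilityMeasure μ
  obtain ⟨M, hM, hmax⟩ := exists_isPowerJoining_maximal hT hS
  refine ⟨⟨determinedBySnd M, determinedBySnd_le⟩,
    ⟨hM.isTFactorSigmaAlgebra_determinedBySnd, fun F hF => ?_⟩,
    fun lam hfst hsnd hinv U V hU hV => ?_⟩
  · obtain ⟨-, Λ, hΛ, hFΛ⟩ := isTFactorSigmaAlgebra_iff_exists_isPowerJoining.1 hF
    exact hFΛ.trans (hmax Λ hΛ)
  · have : IsProbabilityMeasure lam := isProbabilityMeasure_of_measurePreserving hfst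
    refine condExp_inter_ae_eq_mul_of_determinedBySnd_le determinedBySnd_le ?_ hU hV
    rw [hsnd.map_eq]
    exact hmax _ (isPowerJoining_condDistrib hfst hsnd hinv hS)

/-- There is a maximum `T`-factor σ-algebra `ℱ_T` of `S`, and under any joining of `T`
and `S` the two coordinate σ-algebras are conditionally independent given `ℱ_T` (lifted
to the second coordinate). -/
theorem maximal_T_factor_sigma_algebra
    {X Y : Type*} [mX : MeasurableSpace X] [StandardBorelSpace X]
    [mY : MeasurableSpace Y] [StandardBorelSpace Y]
    (μ : Measure X) (ν : Measure Y) [IsProbabilityMeasure μ] [IsProbabilityMeasure ν]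
    (T : X ≃ᵐ X) (S : Y ≃ᵐ Y)
    (hT : MeasurePreserving T μ μ) (hS : MeasurePreserving S ν ν) :
    ∃ FT : {m : MeasurableSpace Y // m ≤ mY},
      IsTFactorSigmaAlgebra μ ν T S FT ∧
      -- `FT` contains every `T`-factor σ-algebra of `S`, modulo `ν`-null sets:
      (∀ F : {m : MeasurableSpace Y // m ≤ mY}, IsTFactorSigmaAlgebra μ ν T S F →
        ∀ B : Set Y, MeasurableSet[F.1] B →
          ∃ B' : Set Y, MeasurableSet[FT.1] B' ∧ ν (symmDiff B B') = 0) ∧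
      -- conditional independence of the coordinates given `FT`, under any joining:
      (∀ lam : Measure (X × Y),
        lam.map Prod.fst = μ → lam.map Prod.snd = ν →
        MeasurePreserving (Prod.map T S) lam lam →
        ∀ (U : Set X) (V : Set Y), MeasurableSet U → MeasurableSet V →
          lam[((U ×ˢ (univ : Set Y)) ∩ ((univ : Set X) ×ˢ V)).indicator
                (fun _ => (1 : ℝ)) | FT.1.comap Prod.snd]
            =ᵐ[lam]
          fun p => (lam[(U ×ˢ (univ : Set Y)).indicator (fun _ => (1 : ℝ))
                      | FT.1.comap Prod.snd]) p *
                   (lam[((univ : Set X) ×ˢ V).indicator (fun _ => (1 : ℝ))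
                      | FT.1.comap Prod.snd]) p) := by
  obtain ⟨FT, ⟨hFT, hmax⟩, hindep⟩ := maximal_T_factor_sigma_algebra_general μ ν T S hT hS
  refine ⟨FT, hFT, fun F hF B hB => ⟨B, hmax hF B hB, by simp⟩, ?_⟩
  simp only [prod_univ, univ_prod]
  exact fun lam hfst hsnd => hindep lam ⟨measurable_fst, hfst⟩ ⟨measurable_snd, hsnd⟩
end

section
/- Any discrete-spectrum system is disjoint from any weakly mixing system: if T is an invertible measure-preserving transformation of a probability space (X, 𝒜, μ) with discrete spectrum, and S is a weakly mixing invertible measure-preserving transformation of a probability space (Y, ℬ, ν), then the only joining of T and S is the product measure μ ⊗ ν. -/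
open MeasureTheory

/-!
A joining is a common extension of `T` and `S` whose factor maps are the two projections. Any common
extension, with factor maps `p` and `q`, carries the operator `f ↦ 𝔼[f ∘ p | q]` from `L²(μ)` to
`L²(ν)`. It sends eigenvectors of `T` to eigenvectors of `S` for the same eigenvalue: conditional
expectation intertwines the adjoints of the Koopman operators, and for `‖c‖ = 1` an eigenvector of
an isometry for `c` is the same thing as an eigenvector of its adjoint for `conj c`. If `h` is an
eigenvector of `S`, then `h ⊗ conj h` is invariant under `S × S`, hence constant when `S` is weakly
mixing, and so `h` itself is constant. When the eigenvectors of `T` span a dense subspace, all the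
functions `𝔼[f ∘ p | q]` are therefore constant, which is to say that `p` and `q` are independent.
-/

open ProbabilityTheory Filter
open scoped ComplexConjugate ENNReal

section Isometry

theorem norm_eq_one_of_linearIsometry_apply_eq_smul {𝕜 E : Type*} [NormedField 𝕜]
    [NormedAddCommGroup E] [NormedSpace 𝕜 E] (U : E →ₗᵢ[𝕜] E) {c : 𝕜} {x : E} (hx : x ≠ 0)
    (h : U x = c • x) : ‖c‖ = 1 := by
  have hnorm : ‖c‖ * ‖x‖ = 1 * ‖x‖ := by rw [← norm_smul, ← h, U.norm_map, one_mul]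
  exact mul_right_cancel₀ (norm_ne_zero_iff.2 hx) hnorm

variable {𝕜 E F : Type*} [RCLike 𝕜]
  [NormedAddCommGroup E] [InnerProductSpace 𝕜 E] [CompleteSpace E]
  [NormedAddCommGroup F] [InnerProductSpace 𝕜 F] [CompleteSpace F]

theorem linearIsometry_adjoint_apply_eq_conj_smul_iff (U : E →ₗᵢ[𝕜] E) {c : 𝕜} (hc : ‖c‖ = 1)
    {x : E} : U.toContinuousLinearMap.adjoint x = conj c • x ↔ U x = c • x := by
  have hcc : conj c * c = 1 := by rw [RCLike.conj_mul, hc]; simp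
  constructor
  · intro h
    have hinner : inner 𝕜 (U x) (c • x) = inner 𝕜 x x := by
      rw [← U.coe_toContinuousLinearMap, ← ContinuousLinearMap.adjoint_inner_right, map_smul, h,
        smul_smul, mul_comm, hcc, one_smul]
    have hsq : ‖U x - c • x‖ ^ 2 = 0 := by
      rw [@norm_sub_sq 𝕜, hinner, inner_self_eq_norm_sq, U.norm_map, norm_smul, hc]
      ring
    exact sub_eq_zero.1 (norm_eq_zero.1 (eq_zero_of_pow_eq_zero hsq))
  · intro h
    have hx : U.toContinuousLinearMap.adjoint (U x) = x := DFunLike.congr_fun U.adjoint_comp_self x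
    rw [h, map_smul] at hx
    rw [← one_smul 𝕜 (U.toContinuousLinearMap.adjoint x), ← hcc, mul_smul, hx]

theorem linearIsometry_apply_adjoint_eq_smul_of_intertwines {U : E →ₗᵢ[𝕜] E} {V : F →ₗᵢ[𝕜] F}
    {A : E →L[𝕜] F} (hA : ∀ x, V (A x) = A (U x)) {c : 𝕜} {y : F} (hy : V y = c • y) :
    U (A.adjoint y) = c • A.adjoint y := by
  rcases eq_or_ne y 0 with rfl | hy0
  · simp
  have hc := norm_eq_one_of_linearIsometry_apply_eq_smul V hy0 hy
  have hcomm : V.toContinuousLinearMap ∘L A = A ∘L U.toContinuousLinearMap :=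
    ContinuousLinearMap.ext hA
  rw [← linearIsometry_adjoint_apply_eq_conj_smul_iff U hc]
  calc U.toContinuousLinearMap.adjoint (A.adjoint y)
      = (A ∘L U.toContinuousLinearMap).adjoint y := by
        rw [ContinuousLinearMap.adjoint_comp]; rfl
    _ = A.adjoint (V.toContinuousLinearMap.adjoint y) := by
        rw [← hcomm, ContinuousLinearMap.adjoint_comp]; rfl
    _ = conj c • A.adjoint y := by
        rw [(linearIsometry_adjoint_apply_eq_conj_smul_iff V hc).2 hy, map_smul]

end Isometry

section Koopman

variable {𝕜 X Y Ω : Type*} [RCLike 𝕜] [MeasurableSpace X] [MeasurableSpace Y] [MeasurableSpace Ω]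
  {μ : Measure X} {ν : Measure Y} {ρ : Measure Ω}

theorem compMeasurePreserving_comm_of_semiconj {E : Type*} [NormedAddCommGroup E] {r : ℝ≥0∞}
    {q : Ω → Y} {R : Ω → Ω} {S : Y → Y} (hq : MeasurePreserving q ρ ν)
    (hR : MeasurePreserving R ρ ρ) (hS : MeasurePreserving S ν ν) (h : Function.Semiconj q R S)
    (g : Lp E r ν) :
    Lp.compMeasurePreserving R hR (Lp.compMeasurePreserving q hq g) =
      Lp.compMeasurePreserving q hq (Lp.compMeasurePreserving S hS g) := by
  rw [← Lp.compMeasurePreserving_comp_apply, ← Lp.compMeasurePreserving_comp_apply]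
  congr 2
  exact h.comp_eq

theorem exists_ae_eq_const_of_comp_ae_eq_smul [SFinite ν] {S : Y → Y}
    (hS : QuasiErgodic (Prod.map S S) (ν.prod ν)) {h : Y → 𝕜} (hm : AEStronglyMeasurable h ν)
    {c : 𝕜} (hc : ‖c‖ = 1) (hh : h ∘ S =ᵐ[ν] c • h) : ∃ a, h =ᵐ[ν] Function.const Y a := by
  have hcc : c * conj c = 1 := by rw [RCLike.mul_conj, hc]; simp
  have hinv : (fun z : Y × Y ↦ h z.1 * conj (h z.2)) ∘ Prod.map S S =ᵐ[ν.prod ν]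
      fun z ↦ h z.1 * conj (h z.2) := by
    filter_upwards [Measure.quasiMeasurePreserving_fst.ae hh,
      Measure.quasiMeasurePreserving_snd.ae hh] with z h₁ h₂
    simp only [Function.comp_apply, Pi.smul_apply, smul_eq_mul] at h₁ h₂
    simp only [Function.comp_apply, Prod.map_fst, Prod.map_snd, h₁, h₂, map_mul]
    linear_combination (h z.1 * conj (h z.2)) * hcc
  obtain ⟨k, hk⟩ := hS.ae_eq_const_of_ae_eq_comp_ae
    (hm.comp_fst.mul (RCLike.continuous_conj.comp_aestronglyMeasurable hm.comp_snd)) hinv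
  by_cases h0 : ∀ᵐ y ∂ν, h y = 0
  · exact ⟨0, h0⟩
  obtain ⟨y, hy0, hy⟩ :=
    ((not_eventually.1 h0).and_eventually (Measure.ae_ae_of_ae_prod hk)).exists
  refine ⟨conj (k / h y), ?_⟩
  filter_upwards [hy] with z hz
  have hz' : h y * conj (h z) = k := hz
  rw [Function.const_apply, ← hz', mul_div_cancel_left₀ _ hy0, RCLike.conj_conj]

theorem mem_range_const_of_compMeasurePreserving_eq_smul [IsFiniteMeasure ν] {r : ℝ≥0∞}
    [Fact (1 ≤ r)] {S : Y → Y} (hS : MeasurePreserving S ν ν)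
    (hwm : QuasiErgodic (Prod.map S S) (ν.prod ν)) {h : Lp 𝕜 r ν} {c : 𝕜}
    (hh : Lp.compMeasurePreserving S hS h = c • h) : h ∈ (Lp.constₗ r ν 𝕜 : 𝕜 →ₗ[𝕜] _).range := by
  rcases eq_or_ne h 0 with rfl | h0
  · exact zero_mem _
  have hc : ‖c‖ = 1 :=
    norm_eq_one_of_linearIsometry_apply_eq_smul (Lp.compMeasurePreservingₗᵢ 𝕜 S hS) h0 hh
  have hcomp : h ∘ S =ᵐ[ν] c • h :=
    (Lp.coeFn_compMeasurePreserving h hS).symm.trans (hh ▸ Lp.coeFn_smul c h)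
  obtain ⟨a, ha⟩ :=
    exists_ae_eq_const_of_comp_ae_eq_smul hwm (Lp.aestronglyMeasurable h) hc hcomp
  exact ⟨a, Lp.ext ((Lp.coeFn_const r ν a).trans ha.symm)⟩

variable (𝕜) in
/-- A measure-preserving map has discrete spectrum if the eigenvectors of its Koopman operator
`f ↦ f ∘ T` span a dense subspace of `L²(μ)`. The scalar field is a parameter. -/
def HasDiscreteSpectrum {T : X → X} (hT : MeasurePreserving T μ μ) : Prop :=
  (Submodule.span 𝕜 {f : Lp 𝕜 2 μ | ∃ c : 𝕜,
    Lp.compMeasurePreserving T hT f = c • f}).topologicalClosure = ⊤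

end Koopman

section FactorOperator

variable {𝕜 X Y Ω : Type*} [RCLike 𝕜] [MeasurableSpace X] [MeasurableSpace Y] [MeasurableSpace Ω]
  {μ : Measure X} {ν : Measure Y} {ρ : Measure Ω} {p : Ω → X} {q : Ω → Y}

variable (𝕜) in
/-- The Markov operator `f ↦ 𝔼[f ∘ p | q]` from `L²(μ)` to `L²(ν)` attached to two factor maps
`p` and `q` of the same space, with the conditional expectation seen as a function on `Y`. It is
encoded as the adjoint of `g ↦ g ∘ q` composed with `f ↦ f ∘ p`. -/
noncomputable def markovOperator (hp : MeasurePreserving p ρ μ) (hq : MeasurePreserving q ρ ν) :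
    Lp 𝕜 2 μ →L[𝕜] Lp 𝕜 2 ν :=
  (Lp.compMeasurePreservingₗᵢ 𝕜 q hq).toContinuousLinearMap.adjoint ∘L
    (Lp.compMeasurePreservingₗᵢ 𝕜 p hp).toContinuousLinearMap

theorem compMeasurePreserving_markovOperator_eq_smul {R : Ω → Ω} {T : X → X} {S : Y → Y}
    (hp : MeasurePreserving p ρ μ) (hq : MeasurePreserving q ρ ν)
    (hR : MeasurePreserving R ρ ρ) {hT : MeasurePreserving T μ μ} (hS : MeasurePreserving S ν ν)
    (hpT : Function.Semiconj p R T) (hqS : Function.Semiconj q R S) {f : Lp 𝕜 2 μ} {c : 𝕜}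
    (hf : Lp.compMeasurePreserving T hT f = c • f) :
    Lp.compMeasurePreserving S hS (markovOperator 𝕜 hp hq f) = c • markovOperator 𝕜 hp hq f := by
  have hRf : Lp.compMeasurePreserving R hR (Lp.compMeasurePreserving p hp f) =
      c • Lp.compMeasurePreserving p hp f := by
    rw [compMeasurePreserving_comm_of_semiconj hp hR hT hpT, hf]
    exact map_smul (Lp.compMeasurePreservingₗᵢ 𝕜 p hp) c f
  let U : Lp 𝕜 2 ν →ₗᵢ[𝕜] Lp 𝕜 2 ν := Lp.compMeasurePreservingₗᵢ 𝕜 S hS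
  let V : Lp 𝕜 2 ρ →ₗᵢ[𝕜] Lp 𝕜 2 ρ := Lp.compMeasurePreservingₗᵢ 𝕜 R hR
  let Q : Lp 𝕜 2 ν →ₗᵢ[𝕜] Lp 𝕜 2 ρ := Lp.compMeasurePreservingₗᵢ 𝕜 q hq
  have hQ : ∀ g, V (Q.toContinuousLinearMap g) = Q.toContinuousLinearMap (U g) :=
    compMeasurePreserving_comm_of_semiconj hq hR hS hqS
  exact linearIsometry_apply_adjoint_eq_smul_of_intertwines hQ hRf

theorem markovOperator_mem_range_const [IsFiniteMeasure ν] {R : Ω → Ω} {T : X → X} {S : Y → Y}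
    (hp : MeasurePreserving p ρ μ) (hq : MeasurePreserving q ρ ν)
    (hR : MeasurePreserving R ρ ρ) {hT : MeasurePreserving T μ μ} (hS : MeasurePreserving S ν ν)
    (hpT : Function.Semiconj p R T) (hqS : Function.Semiconj q R S)
    (hds : HasDiscreteSpectrum 𝕜 hT) (hwm : QuasiErgodic (Prod.map S S) (ν.prod ν))
    (f : Lp 𝕜 2 μ) : markovOperator 𝕜 hp hq f ∈ (Lp.constₗ 2 ν 𝕜 : 𝕜 →ₗ[𝕜] _).range := by
  set constants := (Lp.constₗ 2 ν 𝕜 : 𝕜 →ₗ[𝕜] Lp 𝕜 2 ν).range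
  suffices ⊤ ≤ constants.comap (markovOperator 𝕜 hp hq).toLinearMap from
    this Submodule.mem_top
  rw [← hds]
  refine Submodule.topologicalClosure_minimal _ (Submodule.span_le.2 ?_) ?_
  · rintro e ⟨c, he⟩
    exact mem_range_const_of_compMeasurePreserving_eq_smul hS hwm
      (compMeasurePreserving_markovOperator_eq_smul hp hq hR hS hpT hqS he)
  · exact constants.closed_of_finiteDimensional.preimage (markovOperator 𝕜 hp hq).continuous

theorem inner_markovOperator_right (hp : MeasurePreserving p ρ μ) (hq : MeasurePreserving q ρ ν)
    (f : Lp 𝕜 2 μ) (g : Lp 𝕜 2 ν) :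
    inner 𝕜 g (markovOperator 𝕜 hp hq f) =
      inner 𝕜 (Lp.compMeasurePreserving q hq g) (Lp.compMeasurePreserving p hp f) :=
  ContinuousLinearMap.adjoint_inner_right
    (Lp.compMeasurePreservingₗᵢ 𝕜 q hq).toContinuousLinearMap g
    (Lp.compMeasurePreservingₗᵢ 𝕜 p hp f)

theorem inner_indicatorConstLp_markovOperator (hp : MeasurePreserving p ρ μ)
    (hq : MeasurePreserving q ρ ν) {s : Set X} {t : Set Y} (hs : MeasurableSet s)
    (ht : MeasurableSet t) (hμs : μ s ≠ ∞) (hνt : ν t ≠ ∞) :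
    inner 𝕜 (indicatorConstLp 2 ht hνt (1 : 𝕜))
      (markovOperator 𝕜 hp hq (indicatorConstLp 2 hs hμs 1)) = ρ.real (p ⁻¹' s ∩ q ⁻¹' t) := by
  have hps : ρ (p ⁻¹' s) ≠ ∞ := by rwa [hp.measure_preimage hs.nullMeasurableSet]
  have hqt : ρ (q ⁻¹' t) ≠ ∞ := by rwa [hq.measure_preimage ht.nullMeasurableSet]
  rw [inner_markovOperator_right, Lp.indicatorConstLp_compMeasurePreserving,
    Lp.indicatorConstLp_compMeasurePreserving, Set.inter_comm]
  exact L2.inner_indicatorConstLp_one_indicatorConstLp_one (hq.measurable ht) (hp.measurable hs)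
    hqt hps

theorem measureReal_preimage_inter_eq_mul_of_markovOperator_mem_range_const
    [IsProbabilityMeasure ν] (hp : MeasurePreserving p ρ μ) (hq : MeasurePreserving q ρ ν)
    {s : Set X} {t : Set Y} (hs : MeasurableSet s) (ht : MeasurableSet t) (hμs : μ s ≠ ∞)
    (hconst : markovOperator 𝕜 hp hq (indicatorConstLp 2 hs hμs 1) ∈
      (Lp.constₗ 2 ν 𝕜 : 𝕜 →ₗ[𝕜] _).range) :
    ρ.real (p ⁻¹' s ∩ q ⁻¹' t) = μ.real s * ν.real t := by
  obtain ⟨a, ha⟩ := hconst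
  have hreal {u : Set Y} (hu : MeasurableSet u) :
      (ρ.real (p ⁻¹' s ∩ q ⁻¹' u) : 𝕜) = ν.real u * a := by
    rw [← inner_indicatorConstLp_markovOperator hp hq hs hu hμs (measure_ne_top ν u), ← ha,
      Lp.constₗ_apply, ← indicatorConstLp_univ, L2.inner_indicatorConstLp_indicatorConstLp]
    simp [RCLike.real_smul_eq_coe_mul]
  have ha' : a = μ.real s := by
    simpa [hp.measureReal_preimage hs.nullMeasurableSet] using (hreal .univ).symm
  have hst := hreal ht
  rw [ha', mul_comm] at hst
  exact_mod_cast hst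

end FactorOperator

theorem discrete_spectrum_disjoint_weakly_mixing_general
    {𝕜 X Y Ω : Type*} [RCLike 𝕜] [MeasurableSpace X] [MeasurableSpace Y] [MeasurableSpace Ω]
    {μ : Measure X} {ν : Measure Y} {ρ : Measure Ω} [IsProbabilityMeasure ν]
    {T : X → X} {S : Y → Y} {R : Ω → Ω} {p : Ω → X} {q : Ω → Y}
    {hT : MeasurePreserving T μ μ} (hS : MeasurePreserving S ν ν) (hR : MeasurePreserving R ρ ρ)
    (hp : MeasurePreserving p ρ μ) (hq : MeasurePreserving q ρ ν)
    (hpT : Function.Semiconj p R T) (hqS : Function.Semiconj q R S)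
    (hds : HasDiscreteSpectrum 𝕜 hT) (hwm : Ergodic (Prod.map S S) (ν.prod ν)) :
    IndepFun p q ρ := by
  have : IsProbabilityMeasure (ρ.map q) := hq.map_eq ▸ inferInstance
  have : IsProbabilityMeasure ρ := Measure.isProbabilityMeasure_of_map q
  have : IsProbabilityMeasure μ := hp.map_eq ▸ Measure.isProbabilityMeasure_map hp.aemeasurable
  rw [indepFun_iff_measure_inter_preimage_eq_mul]
  intro s t hs ht
  have hst := measureReal_preimage_inter_eq_mul_of_markovOperator_mem_range_const hp hq hs ht
    (measure_ne_top μ s)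
    (markovOperator_mem_range_const (𝕜 := 𝕜) hp hq hR hS hpT hqS hds hwm.quasiErgodic _)
  rw [hp.measure_preimage hs.nullMeasurableSet, hq.measure_preimage ht.nullMeasurableSet]
  simpa [← measureReal_def] using congrArg ENNReal.ofReal hst

/-- Any discrete-spectrum system is disjoint from any weakly mixing system: the only
joining of them is the product measure. -/
theorem discrete_spectrum_disjoint_weakly_mixing
    {X Y : Type*} [MeasurableSpace X] [MeasurableSpace Y]
    (μ : Measure X) (ν : Measure Y) [IsProbabilityMeasure μ] [IsProbabilityMeasure ν]
    (T : X ≃ᵐ X) (S : Y ≃ᵐ Y)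
    (hT : MeasurePreserving T μ μ) (hS : MeasurePreserving S ν ν)
    -- `T` has discrete spectrum: the span of the eigenvectors of the Koopman operator
    -- `f ↦ f ∘ T` is dense in `L²(μ)`:
    (hds : (Submodule.span ℂ
        {f : Lp ℂ 2 μ | ∃ c : ℂ,
          Lp.compMeasurePreserving (⇑T) hT f = c • f}).topologicalClosure = ⊤)
    -- `S` is weakly mixing:
    (hwm : Ergodic (Prod.map S S) (ν.prod ν)) :
    ∀ lam : Measure (X × Y),
      lam.map Prod.fst = μ → lam.map Prod.snd = ν →
      MeasurePreserving (Prod.map T S) lam lam →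
      lam = μ.prod ν := by
  intro lam hfst hsnd hlam
  have hindep : IndepFun Prod.fst Prod.snd lam :=
    discrete_spectrum_disjoint_weakly_mixing_general hS hlam ⟨measurable_fst, hfst⟩
      ⟨measurable_snd, hsnd⟩ (fun _ ↦ rfl) (fun _ ↦ rfl) hds hwm
  have : IsProbabilityMeasure (lam.map Prod.fst) := hfst ▸ inferInstance
  have : IsProbabilityMeasure lam := Measure.isProbabilityMeasure_of_map Prod.fst
  simpa [hfst, hsnd] using hindep.map_prod_eq_prod_map_map (by fun_prop) (by fun_prop)
end

section
/- Let ξ₁, ξ₂, ξ₃ be random variables on a probability space, taking values in a finite set A, identically distributed and pairwise independent, and suppose there exists a function f : A × A → A such that ξ₃ = f(ξ₁, ξ₂) almost surely. Then their common probability law is the uniform distribution on the set {a ∈ A : P(ξ₁ = a) > 0} of values taken with positive probability. -/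
open MeasureTheory ProbabilityTheory
open scoped ENNReal

/-!
Suppose that on `{Y ∈ t}`, an event of positive probability, `Z` is a function `g` of `X`.
Independence of `Y` from `X` and from `Z` makes `{g X ∈ s}` and `{Z ∈ s}` equally likely, and
`{g X ∈ s} ∩ {Y ∈ t} ⊆ {g X ∈ s} ∩ {Z ∈ s}` almost surely; since `X` is also independent of `Z`,
this yields `P(Y ∈ t) ≤ P(Z ∈ s)` as soon as the right side is positive. With `Y = ξ₁`, `X = ξ₂`,
`Z = ξ₃` and `t = {a}`, no non-null event of the common law of `ξ₁` and `ξ₃` has mass smaller than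
an atom. So all atoms have equal mass, and once there is one they carry the whole law: a non-null
set without atoms could be split into non-null pieces indefinitely.
-/

section FunctionalRelation

variable {Ω α β γ : Type*} [MeasurableSpace Ω] [MeasurableSpace α] [MeasurableSpace β]
  [MeasurableSpace γ] {P : Measure Ω} [IsFiniteMeasure P] {X : Ω → α} {Y : Ω → β} {Z : Ω → γ}
  {g : α → γ} {s : Set γ} {t : Set β}

theorem measure_preimage_preimage_eq_of_indepFun (hXY : IndepFun X Y P) (hZY : IndepFun Z Y P)
    (hg : Measurable g) (hs : MeasurableSet s) (ht : MeasurableSet t) (ht0 : P (Y ⁻¹' t) ≠ 0)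
    (hZ : ∀ᵐ ω ∂P, Y ω ∈ t → Z ω = g (X ω)) :
    P (X ⁻¹' (g ⁻¹' s)) = P (Z ⁻¹' s) := by
  have events_ae_eq : (X ⁻¹' (g ⁻¹' s) ∩ Y ⁻¹' t : Set Ω) =ᵐ[P] (Z ⁻¹' s ∩ Y ⁻¹' t : Set Ω) := by
    filter_upwards [hZ] with ω hω
    refine propext (and_congr_left fun hY ↦ ?_)
    change g (X ω) ∈ s ↔ Z ω ∈ s
    rw [hω hY]
  refine (ENNReal.mul_left_inj ht0 (measure_ne_top P _)).1 ?_
  rw [← hXY.measure_inter_preimage_eq_mul _ _ (hg hs) ht,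
    ← hZY.measure_inter_preimage_eq_mul _ _ hs ht, measure_congr events_ae_eq]

theorem measure_preimage_le_of_pairwise_indepFun (hXY : IndepFun X Y P) (hZY : IndepFun Z Y P)
    (hXZ : IndepFun X Z P) (hg : Measurable g) (hs : MeasurableSet s) (ht : MeasurableSet t)
    (hZ : ∀ᵐ ω ∂P, Y ω ∈ t → Z ω = g (X ω)) (hs0 : P (Z ⁻¹' s) ≠ 0) :
    P (Y ⁻¹' t) ≤ P (Z ⁻¹' s) := by
  rcases eq_or_ne (P (Y ⁻¹' t)) 0 with ht0 | ht0
  · simp [ht0]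
  have hgX : P (X ⁻¹' (g ⁻¹' s)) = P (Z ⁻¹' s) :=
    measure_preimage_preimage_eq_of_indepFun hXY hZY hg hs ht ht0 hZ
  refine (ENNReal.mul_le_mul_iff_right hs0 (measure_ne_top P _)).1 ?_
  calc P (Z ⁻¹' s) * P (Y ⁻¹' t)
      = P (X ⁻¹' (g ⁻¹' s) ∩ Y ⁻¹' t) := by
        rw [hXY.measure_inter_preimage_eq_mul _ _ (hg hs) ht, hgX]
    _ ≤ P (X ⁻¹' (g ⁻¹' s) ∩ Z ⁻¹' s) := by
        refine measure_mono_ae ?_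
        filter_upwards [hZ] with ω hω hmem
        refine ⟨hmem.1, ?_⟩
        rw [Set.mem_preimage, hω hmem.2]
        exact hmem.1
    _ = P (Z ⁻¹' s) * P (Z ⁻¹' s) := by
        rw [hXZ.measure_inter_preimage_eq_mul _ _ (hg hs) hs, hgX]

end FunctionalRelation

section Atoms

variable {α : Type*} [MeasurableSpace α] {μ : Measure α} {s : Set α}

theorem exists_mem_measure_singleton_ne_zero_of_forall_inter_or_sdiff
    [MeasurableSpace.CountablySeparated α] (hs : MeasurableSet s) (hs0 : μ s ≠ 0)
    (h : ∀ t, MeasurableSet t → μ (s ∩ t) = 0 ∨ μ (s \ t) = 0) :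
    ∃ x ∈ s, μ {x} ≠ 0 := by
  have hsplit (t : Set α) (ht : MeasurableSet t) :
      t ∈ ae (μ.restrict s) ∨ tᶜ ∈ ae (μ.restrict s) := by
    rw [mem_ae_iff, mem_ae_iff, compl_compl, Measure.restrict_apply ht.compl,
      Measure.restrict_apply ht, Set.inter_comm t, Set.inter_comm tᶜ, ← Set.sdiff_eq]
    exact (h t ht).symm
  have : HasCountableSeparatingOn α MeasurableSet s :=
    .mono (t₁ := Set.univ) (fun _ ↦ id) (Set.subset_univ s)
  obtain ⟨x, hxs, hx⟩ :=
    Filter.exists_mem_singleton_mem_of_mem_of_nonempty_of_forall_separating MeasurableSet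
      (self_mem_ae_restrict hs) (nonempty_of_measure_ne_zero hs0) hsplit
  refine ⟨x, hxs, fun hx0 ↦ hs0 ?_⟩
  have hdiff : μ (s \ {x}) = 0 := by
    rwa [mem_ae_iff, Measure.restrict_apply' hs, Set.inter_comm, ← Set.sdiff_eq] at hx
  exact measure_mono_null (Set.sdiff_subset_iff.1 subset_rfl) (measure_union_null hx0 hdiff)

theorem exists_mem_measure_singleton_ne_zero_of_forall_le
    [MeasurableSpace.CountablySeparated α] [IsFiniteMeasure μ] {ε : ℝ≥0∞} (hε : ε ≠ 0)
    (hμ : ∀ t, MeasurableSet t → μ t ≠ 0 → ε ≤ μ t) (hs : MeasurableSet s) (hs0 : μ s ≠ 0) :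
    ∃ x ∈ s, μ {x} ≠ 0 := by
  have hε_top : ε ≠ ⊤ := ne_top_of_le_ne_top (measure_ne_top μ s) (hμ s hs hs0)
  obtain ⟨n, hn⟩ := ENNReal.exists_nat_mul_gt hε (measure_ne_top μ s)
  replace hn := hn.le
  -- Splitting a set into two non-null parts lowers its mass by at least `ε`.
  induction n generalizing s with
  | zero => exact absurd (by simpa using hn) hs0
  | succ n ih =>
    by_cases h : ∀ t, MeasurableSet t → μ (s ∩ t) = 0 ∨ μ (s \ t) = 0
    · exact exists_mem_measure_singleton_ne_zero_of_forall_inter_or_sdiff hs hs0 h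
    push Not at h
    obtain ⟨t, ht, hinter, hdiff⟩ := h
    have hle : μ (s ∩ t) + ε ≤ n * ε + ε := calc
      μ (s ∩ t) + ε ≤ μ (s ∩ t) + μ (s \ t) := by gcongr; exact hμ _ (hs.diff ht) hdiff
      _ = μ s := measure_inter_add_sdiff s ht
      _ ≤ n * ε + ε := by rwa [Nat.cast_succ, add_one_mul] at hn
    obtain ⟨x, hx, hx0⟩ := ih (hs.inter ht) hinter ((ENNReal.add_le_add_iff_right hε_top).1 hle)
    exact ⟨x, hx.1, hx0⟩

theorem measure_eq_ncard_mul_of_forall_singleton [MeasurableSingletonClass α] {c : ℝ≥0∞}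
    (hs : s.Finite) (h : ∀ x ∈ s, μ {x} = c) : μ s = s.ncard * c := by
  lift s to Finset α using hs
  rw [← sum_measure_singleton, Finset.sum_congr rfl h, Finset.sum_const, nsmul_eq_mul,
    Set.ncard_coe_finset]

theorem measure_singleton_eq_inv_card_of_forall_singleton_le
    [MeasurableSpace.CountablySeparated α] [IsProbabilityMeasure μ]
    (hμ : ∀ x t, MeasurableSet t → μ t ≠ 0 → μ {x} ≤ μ t) {a : α} (ha : μ {a} ≠ 0) :
    μ {a} = (Nat.card {x // μ {x} ≠ 0} : ℝ≥0∞)⁻¹ := by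
  have := MeasurableSpace.measurableSingletonClass_of_countablySeparated (α := α)
  have hatoms : {x | μ {x} ≠ 0} = {x | μ {a} ≤ μ {x}} :=
    Set.ext fun x ↦
      ⟨hμ a {x} (measurableSet_singleton x), fun hx hx0 ↦ ha (by simpa [hx0] using hx)⟩
  have hfinite : {x | μ {x} ≠ 0}.Finite := by
    rw [hatoms]
    exact Measure.finite_const_le_meas_of_disjoint_iUnion μ (pos_iff_ne_zero.2 ha)
      measurableSet_singleton (fun x y hxy ↦ Set.disjoint_singleton.2 hxy) (measure_ne_top μ _)
  have hcompl : μ {x | μ {x} ≠ 0}ᶜ = 0 := by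
    by_contra h0
    obtain ⟨x, hx, hx0⟩ := exists_mem_measure_singleton_ne_zero_of_forall_le ha (hμ a)
      hfinite.measurableSet.compl h0
    exact hx hx0
  have heq (x : α) (hx : μ {x} ≠ 0) : μ {x} = μ {a} :=
    le_antisymm (hμ x {a} (measurableSet_singleton a) ha) (hμ a {x} (measurableSet_singleton x) hx)
  refine ENNReal.eq_inv_of_mul_eq_one_left ?_
  calc μ {a} * Nat.card {x // μ {x} ≠ 0}
      = μ {x | μ {x} ≠ 0} := by
        rw [measure_eq_ncard_mul_of_forall_singleton hfinite heq, mul_comm]; rfl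
    _ = 1 := (prob_compl_eq_zero_iff hfinite.measurableSet).1 hcompl

end Atoms

theorem uniform_law_of_pairwise_indep_functional_relation_general
    {Ω : Type*} [MeasurableSpace Ω] {P : Measure Ω} [IsProbabilityMeasure P]
    {A B : Type*} [MeasurableSpace A] [MeasurableSpace.CountablySeparated A] [MeasurableSpace B]
    {ξ₁ ξ₃ : Ω → A} {ξ₂ : Ω → B} (hid13 : IdentDistrib ξ₁ ξ₃ P P)
    (hi12 : IndepFun ξ₁ ξ₂ P) (hi13 : IndepFun ξ₁ ξ₃ P) (hi23 : IndepFun ξ₂ ξ₃ P)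
    {f : A × B → A} (hfm : ∀ a, Measurable fun b ↦ f (a, b))
    (hf : ∀ᵐ ω ∂P, ξ₃ ω = f (ξ₁ ω, ξ₂ ω)) {a : A} (ha : P (ξ₁ ⁻¹' {a}) ≠ 0) :
    P (ξ₁ ⁻¹' {a}) = (Nat.card {b : A // P (ξ₁ ⁻¹' {b}) ≠ 0} : ℝ≥0∞)⁻¹ := by
  have := MeasurableSpace.measurableSingletonClass_of_countablySeparated (α := A)
  have hξ₁ := hid13.aemeasurable_fst
  have := Measure.isProbabilityMeasure_map hξ₁
  have hlaw (x : A) : P.map ξ₁ {x} = P (ξ₁ ⁻¹' {x}) :=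
    Measure.map_apply_of_aemeasurable hξ₁ (measurableSet_singleton x)
  have atom_le (x : A) (s : Set A) (hs : MeasurableSet s) (hs0 : P.map ξ₁ s ≠ 0) :
      P.map ξ₁ {x} ≤ P.map ξ₁ s := by
    have hmap : P.map ξ₁ s = P (ξ₃ ⁻¹' s) := by
      rw [Measure.map_apply_of_aemeasurable hξ₁ hs, hid13.measure_mem_eq hs]
    rw [hmap] at hs0 ⊢
    rw [hlaw]
    refine measure_preimage_le_of_pairwise_indepFun hi12.symm hi13.symm hi23 (hfm x) hs
      (measurableSet_singleton x) ?_ hs0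
    filter_upwards [hf] with ω hω hx
    rw [hω, Set.mem_singleton_iff.1 hx]
  simp_rw [← hlaw] at ha ⊢
  exact measure_singleton_eq_inv_card_of_forall_singleton_le atom_le ha

/-- If `ξ₁, ξ₂, ξ₃` are identically distributed, pairwise independent random variables
with values in a finite set, and `ξ₃ = f(ξ₁, ξ₂)` a.s. for some function `f`, then their
common law is uniform on the set of values taken with positive probability. -/
theorem uniform_law_of_pairwise_indep_functional_relation
    {Ω : Type*} [MeasurableSpace Ω] (P : Measure Ω) [IsProbabilityMeasure P]
    {A : Type*} [Fintype A] [MeasurableSpace A] [MeasurableSingletonClass A]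
    (ξ₁ ξ₂ ξ₃ : Ω → A)
    (hm1 : Measurable ξ₁) (hm2 : Measurable ξ₂) (hm3 : Measurable ξ₃)
    (hid12 : P.map ξ₁ = P.map ξ₂) (hid13 : P.map ξ₁ = P.map ξ₃)
    (hi12 : IndepFun ξ₁ ξ₂ P) (hi13 : IndepFun ξ₁ ξ₃ P) (hi23 : IndepFun ξ₂ ξ₃ P)
    (f : A × A → A) (hf : ∀ᵐ ω ∂P, ξ₃ ω = f (ξ₁ ω, ξ₂ ω)) :
    ∀ a : A, P (ξ₁ ⁻¹' {a}) ≠ 0 →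
      P (ξ₁ ⁻¹' {a}) = ((Nat.card {b : A // P (ξ₁ ⁻¹' {b}) ≠ 0} : ℝ≥0∞))⁻¹ :=
  fun _ ha ↦ uniform_law_of_pairwise_indep_functional_relation_general
    ⟨hm1.aemeasurable, hm3.aemeasurable, hid13⟩ hi12 hi13 hi23
    (fun _ ↦ measurable_of_finite _) hf ha
end
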